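/- arXiv:1809.07051 — 7 statements merged into one kernel-verified Lean document; each statement's English description precedes it below -/
import Mathlib

section
/- Let d ≥ 1, let F ⊆ ℝ^d, let ν > 0, and let x_i, x_{i+1} ∈ ℝ^d satisfy ‖x_{i+1} − x_i‖ ≤ ν/5 and B_ν(x_i) ⊆ F. Let S ⊆ ℝ^d be a finite nonempty set containing a point x'_i with ‖x'_i − x_i‖ ≤ ν/5. Let x_rand ∈ ℝ^d satisfy ‖x_rand − x_{i+1}‖ ≤ ν/5 and let x_near be a nearest neighbor of x_rand in S. Then ‖x_near − x_i‖ ≤ ν, and the straight-line segment between x_near and x_rand is entirely contained in F. -/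
open Metric

/-- If the RRT tree has reached the ball of radius ν/5 around `x i`, and a new
sample is drawn in the ball of radius ν/5 around `x (i+1)`, then the nearest neighbor of the
sample lies within distance ν of `x i`, and the segment from the nearest neighbor to the
sample lies in the free space. -/
theorem geom_rrt_step (d : ℕ) (_hd : 1 ≤ d)
    (F : Set (EuclideanSpace ℝ (Fin d))) (ν : ℝ) (hν : 0 < ν)
    (xi xi1 : EuclideanSpace ℝ (Fin d))
    (hstep : ‖xi1 - xi‖ ≤ ν / 5)
    (hclear : closedBall xi ν ⊆ F)
    (S : Finset (EuclideanSpace ℝ (Fin d))) (hS : S.Nonempty)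
    (xi' : EuclideanSpace ℝ (Fin d)) (hxi'S : xi' ∈ S) (hxi' : ‖xi' - xi‖ ≤ ν / 5)
    (xrand : EuclideanSpace ℝ (Fin d)) (hrand : ‖xrand - xi1‖ ≤ ν / 5)
    (xnear : EuclideanSpace ℝ (Fin d))
    (hnearS : xnear ∈ S) (hnear : ∀ z ∈ S, ‖xnear - xrand‖ ≤ ‖z - xrand‖) :
    ‖xnear - xi‖ ≤ ν ∧ segment ℝ xnear xrand ⊆ F := by
  have hrand_xi : ‖xrand - xi‖ ≤ 2 * ν / 5 := by
    linarith [norm_sub_le_norm_sub_add_norm_sub xrand xi1 xi]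
  -- Compare the nearest neighbor with the competitor `xi' ∈ S`, at distance at most `3ν/5`.
  have hnear_rand : ‖xnear - xrand‖ ≤ 3 * ν / 5 := by
    linarith [hnear xi' hxi'S, norm_sub_le_norm_sub_add_norm_sub xi' xi xrand,
      norm_sub_rev xi xrand]
  have hnear_xi : ‖xnear - xi‖ ≤ ν := by
    linarith [norm_sub_le_norm_sub_add_norm_sub xnear xrand xi]
  refine ⟨hnear_xi, ((convex_closedBall xi ν).segment_subset ?_ ?_).trans hclear⟩
  · exact mem_closedBall_iff_norm.2 hnear_xi
  · exact mem_closedBall_iff_norm.2 (by linarith)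
end

section
/- Consider GEOM-RRT with free space F ⊆ ℝ^d, initial point x_init ∈ F, steering parameter η > 0, a nearest-neighbor selector NN, and a sample sequence ω : ℕ → ℝ^d. Let ν satisfy 0 < ν ≤ η, and let x_0, …, x_m ∈ ℝ^d be points with x_0 = x_init, ‖x_{j+1} − x_j‖ ≤ ν/5 for all 0 ≤ j < m, and B_ν(x_j) ⊆ F for all 0 ≤ j ≤ m. Suppose there are indices i_1 < i_2 < ⋯ < i_m such that ‖ω_{i_j} − x_j‖ ≤ ν/5 for each 1 ≤ j ≤ m. Then for every 1 ≤ j ≤ m the vertex set V_{i_j + 1}(ω) contains a vertex v with ‖v − x_j‖ ≤ ν/5; in particular, V_{i_m + 1}(ω) contains a vertex within distance ν/5 of x_m. -/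
/-!
The argument is an induction along the waypoints. If the tree contains a vertex within `ν / 5` of
`x j` when a sample `q` within `ν / 5` of `x (j + 1)` is drawn, that vertex is within `3ν / 5` of
`q`, hence so is the nearest neighbor of `q`. As `3ν / 5 ≤ η`, steering goes all the way to `q`.
Both ends of the new edge lie within `4ν / 5` of `x (j + 1)`, so by convexity the edge stays in the
collision-free ball of radius `ν` there, and `q` itself becomes a vertex (`sample_mem_geomRRT`).
Vertex sets only grow (`geomRRT_mono`) and the sample indices increase, so the vertex near `x j`
is still present when the next sample is drawn.
-/

open Metric

attribute [local instance] Classical.propDecidable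

/-- The GEOM-RRT vertex sets: `V 0 = {x_init}`; at step `i` the sample `ω i` is drawn, its
nearest neighbor `x_near` in the current vertex set is computed via the selector `NN`, the
steering step produces `x_new` at distance at most `η` from `x_near` towards `ω i`, and
`x_new` is added if the segment from `x_near` to `x_new` is collision free. -/
noncomputable def geomRRT (d : ℕ) (F : Set (EuclideanSpace ℝ (Fin d)))
    (xinit : EuclideanSpace ℝ (Fin d)) (η : ℝ)
    (NN : Finset (EuclideanSpace ℝ (Fin d)) → EuclideanSpace ℝ (Fin d) →
      EuclideanSpace ℝ (Fin d))
    (ω : ℕ → EuclideanSpace ℝ (Fin d)) : ℕ → Finset (EuclideanSpace ℝ (Fin d))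
  | 0 => {xinit}
  | i + 1 =>
      let V := geomRRT d F xinit η NN ω i
      let xnear := NN V (ω i)
      let xnew := if ω i = xnear then xnear
        else xnear + (min 1 (η / ‖ω i - xnear‖)) • (ω i - xnear)
      if segment ℝ xnear xnew ⊆ F then insert xnew V else V

theorem geomRRT_mono (d : ℕ) (F : Set (EuclideanSpace ℝ (Fin d)))
    (xinit : EuclideanSpace ℝ (Fin d)) (η : ℝ)
    (NN : Finset (EuclideanSpace ℝ (Fin d)) → EuclideanSpace ℝ (Fin d) →
      EuclideanSpace ℝ (Fin d))
    (ω : ℕ → EuclideanSpace ℝ (Fin d)) : Monotone (geomRRT d F xinit η NN ω) := by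
  refine monotone_nat_of_le_succ fun i => ?_
  simp only [geomRRT]
  split_ifs
  all_goals first
    | exact Finset.subset_insert _ _
    | exact le_rfl

/-- A sample within `3ν / 5` of the current tree and within `ν / 5` of the center of a
collision-free ball of radius `ν` becomes a vertex of the tree. -/
theorem sample_mem_geomRRT (d : ℕ) (F : Set (EuclideanSpace ℝ (Fin d)))
    (xinit : EuclideanSpace ℝ (Fin d)) (η : ℝ)
    (NN : Finset (EuclideanSpace ℝ (Fin d)) → EuclideanSpace ℝ (Fin d) →
      EuclideanSpace ℝ (Fin d))
    (hNN : ∀ (S : Finset (EuclideanSpace ℝ (Fin d))), S.Nonempty →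
      ∀ q, NN S q ∈ S ∧ ∀ z ∈ S, ‖NN S q - q‖ ≤ ‖z - q‖)
    (ω : ℕ → EuclideanSpace ℝ (Fin d))
    (ν : ℝ) (hν : 0 < ν) (hνη : ν ≤ η) (i : ℕ) (y v : EuclideanSpace ℝ (Fin d))
    (hv : v ∈ geomRRT d F xinit η NN ω i) (hvω : ‖v - ω i‖ ≤ 3 * ν / 5)
    (hωy : ‖ω i - y‖ ≤ ν / 5) (hF : closedBall y ν ⊆ F) :
    ω i ∈ geomRRT d F xinit η NN ω (i + 1) := by
  simp only [geomRRT]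
  set p := NN (geomRRT d F xinit η NN ω i) (ω i)
  have hp : ‖p - ω i‖ ≤ 3 * ν / 5 := ((hNN _ ⟨v, hv⟩ (ω i)).2 v hv).trans hvω
  have hnew : (if ω i = p then p else p + (min 1 (η / ‖ω i - p‖)) • (ω i - p)) = ω i := by
    split_ifs with h
    · exact h.symm
    · have hpos : 0 < ‖ω i - p‖ := norm_pos_iff.2 (sub_ne_zero.2 h)
      have hle : ‖ω i - p‖ ≤ η := by rw [norm_sub_rev]; linarith
      rw [min_eq_left ((one_le_div hpos).2 hle), one_smul, add_sub_cancel]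
  have hseg : segment ℝ p (ω i) ⊆ F := by
    refine ((convex_closedBall y ν).segment_subset ?_ ?_).trans hF
    · rw [mem_closedBall_iff_norm]
      linarith [norm_sub_le_norm_sub_add_norm_sub p (ω i) y]
    · rw [mem_closedBall_iff_norm]
      linarith
  rw [hnew, if_pos hseg]
  exact Finset.mem_insert_self _ _

/-- if the samples contain, in order, points within ν/5 of each of the waypoints
`x 1, …, x m` of a ν-clear path (with consecutive waypoints at distance ≤ ν/5 and
`x 0 = x_init`), then after the corresponding iterations the RRT tree contains a vertex
within ν/5 of each waypoint. -/
theorem geomRRT_reaches_waypoints (d : ℕ) (_hd : 1 ≤ d)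
    (F : Set (EuclideanSpace ℝ (Fin d)))
    (xinit : EuclideanSpace ℝ (Fin d)) (hinit : xinit ∈ F) (η : ℝ) (hη : 0 < η)
    (NN : Finset (EuclideanSpace ℝ (Fin d)) → EuclideanSpace ℝ (Fin d) →
      EuclideanSpace ℝ (Fin d))
    (hNN : ∀ (S : Finset (EuclideanSpace ℝ (Fin d))), S.Nonempty →
      ∀ q, NN S q ∈ S ∧ ∀ z ∈ S, ‖NN S q - q‖ ≤ ‖z - q‖)
    (ω : ℕ → EuclideanSpace ℝ (Fin d))
    (ν : ℝ) (hν : 0 < ν) (hνη : ν ≤ η)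
    (m : ℕ) (x : ℕ → EuclideanSpace ℝ (Fin d))
    (hx0 : x 0 = xinit)
    (hstep : ∀ j < m, ‖x (j + 1) - x j‖ ≤ ν / 5)
    (hclear : ∀ j ≤ m, closedBall (x j) ν ⊆ F)
    (idx : ℕ → ℕ) (hidx : ∀ j, 1 ≤ j → j < m → idx j < idx (j + 1))
    (hsample : ∀ j, 1 ≤ j → j ≤ m → ‖ω (idx j) - x j‖ ≤ ν / 5) :
    ∀ j, 1 ≤ j → j ≤ m →
      ∃ v ∈ geomRRT d F xinit η NN ω (idx j + 1), ‖v - x j‖ ≤ ν / 5 := by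
  -- At `j = 0` the root `xinit = x 0` is present in every vertex set, so the base case and the
  -- inductive step both reduce to finding a vertex near `x j` just before the sample for `x (j + 1)`.
  have key : ∀ j < m, (∃ v ∈ geomRRT d F xinit η NN ω (idx (j + 1)), ‖v - x j‖ ≤ ν / 5) →
      ω (idx (j + 1)) ∈ geomRRT d F xinit η NN ω (idx (j + 1) + 1) := by
    rintro j hj ⟨v, hv, hvx⟩
    have hs := hsample (j + 1) (by omega) hj
    refine sample_mem_geomRRT d F xinit η NN hNN ω ν hν hνη _ (x (j + 1)) v hv ?_ hs
      (hclear _ hj)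
    have h₁ := norm_sub_le_norm_sub_add_norm_sub v (x j) (ω (idx (j + 1)))
    have h₂ := norm_sub_le_norm_sub_add_norm_sub (x j) (x (j + 1)) (ω (idx (j + 1)))
    rw [norm_sub_rev (x j) (x (j + 1)), norm_sub_rev (x (j + 1)) (ω _)] at h₂
    linarith [hstep j hj]
  intro j hj
  induction j, hj using Nat.le_induction with
  | base =>
    intro hm
    refine ⟨_, key 0 hm ⟨xinit, ?_, ?_⟩, hsample 1 le_rfl hm⟩
    · exact geomRRT_mono d F xinit η NN ω (Nat.zero_le _) (by simp [geomRRT])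
    · rw [hx0, sub_self, norm_zero]
      positivity
  | succ j hj ih =>
    intro hm
    obtain ⟨v, hv, hvx⟩ := ih (by omega)
    exact ⟨_, key j hm ⟨v, geomRRT_mono d F xinit η NN ω (hidx j hj hm) hv, hvx⟩,
      hsample (j + 1) (by omega) hm⟩
end

section
/- Let (Ω, 𝔉, μ) be a probability space with a filtration 𝔉_0 ⊆ 𝔉_1 ⊆ ⋯ ⊆ 𝔉, let p ∈ [0,1], let k be a natural number, and let A_0, …, A_{k−1} be events such that for every i < k, A_i is 𝔉_{i+1}-measurable and the conditional probability of A_i given 𝔉_i is at least p almost everywhere (i.e., the conditional expectation of the indicator of A_i with respect to 𝔉_i is ≥ p μ-a.e.). Then for every natural number m ≤ k, μ({ω ∈ Ω : the number of indices i < k with ω ∈ A_i is strictly less than m}) ≤ Σ_{i=0}^{m−1} C(k,i) · p^i · (1 − p)^{k−i}. -/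
/-!
Write `N k ω` for the number of `i < k` with `ω ∈ A i`. Since `N (k + 1) = N k + 1_{A k}`,

  `P(N (k + 1) < m + 1) = P(N k < m + 1) - P(N k = m, A k)`,

and `{N k = m}` belongs to `ℱ k`, so integrating the bound on the conditional probability over it
gives `P(N k = m, A k) ≥ p * P(N k = m)`. Hence

  `P(N (k + 1) < m + 1) ≤ (1 - p) * P(N k < m + 1) + p * P(N k < m)`.

By Pascal's rule the binomial lower tail satisfies this recursion with equality
(`binomTail_succ_succ`). Because `p` and `1 - p` are nonnegative, induction on `k` concludes,
simultaneously for all `m`.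
-/

open MeasureTheory

attribute [local instance] Classical.propDecidable

/-- The lower tail `P(Bin(k, p) < m)` as an explicit sum. Terms with `i > k`, where `k - i`
truncates, vanish through the binomial coefficient. -/
noncomputable def binomTail (p : ℝ) (k m : ℕ) : ℝ :=
  ∑ i ∈ Finset.range m, (k.choose i : ℝ) * p ^ i * (1 - p) ^ (k - i)

lemma binomTail_succ_succ (p : ℝ) (k m : ℕ) :
    binomTail p (k + 1) (m + 1) = (1 - p) * binomTail p k (m + 1) + p * binomTail p k m := by
  induction m with
  | zero => simp [binomTail, pow_succ']
  | succ m ih =>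
    have h1 : ∀ k m, binomTail p k (m + 1) =
        binomTail p k m + (k.choose m : ℝ) * p ^ m * (1 - p) ^ (k - m) :=
      fun k m => Finset.sum_range_succ _ _
    rw [h1 (k + 1) (m + 1), ih, h1 k (m + 1), h1 k m, Nat.choose_succ_succ, Nat.add_sub_add_right]
    rcases Nat.lt_or_ge m k with h | h
    · obtain ⟨d, rfl⟩ := Nat.exists_eq_add_of_lt h
      rw [show m + d + 1 - m = d + 1 by omega, show m + d + 1 - (m + 1) = d by omega]
      push_cast
      ring
    · rw [Nat.choose_eq_zero_of_lt (show k < m + 1 by omega)]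
      push_cast
      ring

/-- The number of indices `i < k` such that `ω ∈ A i`. -/
noncomputable def numSuccesses {Ω : Type*} (A : ℕ → Set Ω) (k : ℕ) (ω : Ω) : ℕ :=
  ((Finset.range k).filter fun i => ω ∈ A i).card

lemma numSuccesses_succ {Ω : Type*} (A : ℕ → Set Ω) (k : ℕ) (ω : Ω) :
    numSuccesses A (k + 1) ω = numSuccesses A k ω + if ω ∈ A k then 1 else 0 := by
  simp only [numSuccesses, Finset.card_filter, Finset.sum_range_succ]

lemma measurable_numSuccesses {Ω : Type*} {m0 : MeasurableSpace Ω} (ℱ : Filtration ℕ m0)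
    (A : ℕ → Set Ω) (k : ℕ) (hmeas : ∀ i < k, MeasurableSet[ℱ (i + 1)] (A i)) :
    Measurable[ℱ k] (numSuccesses A k) := by
  have h : numSuccesses A k = fun ω => ∑ i ∈ Finset.range k, if ω ∈ A i then 1 else 0 := by
    ext ω
    simp only [numSuccesses, Finset.card_filter]
  rw [h]
  refine Finset.measurable_fun_sum _ fun i hi => ?_
  have hi' := Finset.mem_range.1 hi
  exact Measurable.ite (ℱ.mono (Nat.succ_le_of_lt hi') _ (hmeas i hi')) measurable_const
    measurable_const

/-- A lower bound on a conditional probability given `m` integrates to a lower bound on the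
probability of the intersection with any `m`-measurable event. -/
lemma mul_measureReal_le_of_le_condExp {Ω : Type*} {m m0 : MeasurableSpace Ω} (hm : m ≤ m0)
    (μ : Measure Ω) [IsProbabilityMeasure μ] {p : ℝ} {A S : Set Ω}
    (hA : MeasurableSet[m0] A) (hS : MeasurableSet[m] S)
    (hcond : ∀ᵐ ω ∂μ, p ≤ (μ[A.indicator (fun _ => (1 : ℝ)) | m]) ω) :
    p * μ.real S ≤ μ.real (S ∩ A) := by
  have hint : Integrable (A.indicator (fun _ => (1 : ℝ))) μ :=
    (integrable_const 1).indicator hA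
  calc p * μ.real S = ∫ _ in S, p ∂μ := by simp [mul_comm]
    _ ≤ ∫ ω in S, (μ[A.indicator (fun _ => (1 : ℝ)) | m]) ω ∂μ :=
      setIntegral_mono_ae (integrable_const p).integrableOn
        integrable_condExp.integrableOn hcond
    _ = ∫ ω in S, A.indicator (fun _ => (1 : ℝ)) ω ∂μ := setIntegral_condExp hm hint hS
    _ = μ.real (S ∩ A) := by
      rw [setIntegral_indicator hA]
      simp

lemma measureReal_numSuccesses_lt_le {Ω : Type*} {m0 : MeasurableSpace Ω} (μ : Measure Ω)
    [IsProbabilityMeasure μ] (ℱ : Filtration ℕ m0) (p : ℝ) (hp0 : 0 ≤ p) (hp1 : p ≤ 1)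
    (A : ℕ → Set Ω) (k : ℕ) (hmeas : ∀ i < k, MeasurableSet[ℱ (i + 1)] (A i))
    (hcond : ∀ i < k, ∀ᵐ ω ∂μ,
      p ≤ (μ[(A i).indicator (fun _ => (1 : ℝ)) | ℱ i]) ω) (m : ℕ) :
    μ.real {ω | numSuccesses A k ω < m} ≤ binomTail p k m := by
  induction k generalizing m with
  | zero =>
    cases m with
    | zero => simp [binomTail]
    | succ m => simp [binomTail, numSuccesses, Finset.sum_range_succ']
  | succ k ih =>
    cases m with
    | zero => simp [binomTail]
    | succ m =>
      have ih' := ih (fun i hi => hmeas i (by omega)) fun i hi => hcond i (by omega)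
      have hN := measurable_numSuccesses ℱ A k fun i hi => hmeas i (by omega)
      have hS : MeasurableSet[ℱ k] {ω | numSuccesses A k ω = m} := hN (measurableSet_singleton m)
      have hA : MeasurableSet (A k) := ℱ.le _ _ (hmeas k (by omega))
      have hstep := mul_measureReal_le_of_le_condExp (ℱ.le k) μ hA hS (hcond k (by omega))
      have hsplit : μ.real {ω | numSuccesses A k ω < m + 1} =
          μ.real {ω | numSuccesses A k ω < m} + μ.real {ω | numSuccesses A k ω = m} := by
        rw [← measureReal_union _ (ℱ.le k _ hS)]
        · congr 1
          ext ω
          simp only [Set.mem_ofPred_eq, Set.mem_union]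
          omega
        · rw [Set.disjoint_left]
          intro ω h1 h2
          simp only [Set.mem_ofPred_eq] at h1 h2
          omega
      have hsplit' : μ.real {ω | numSuccesses A k ω < m + 1} =
          μ.real {ω | numSuccesses A (k + 1) ω < m + 1} +
            μ.real ({ω | numSuccesses A k ω = m} ∩ A k) := by
        rw [← measureReal_union _ ((ℱ.le k _ hS).inter hA)]
        · congr 1
          ext ω
          simp only [Set.mem_ofPred_eq, Set.mem_union, Set.mem_inter_iff, numSuccesses_succ]
          by_cases h : ω ∈ A k <;> simp only [h, if_true, if_false, and_true, and_false,
            or_false] <;> omega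
        · rw [Set.disjoint_left]
          rintro ω h1 ⟨h2, h3⟩
          simp only [Set.mem_ofPred_eq, numSuccesses_succ, if_pos h3] at h1 h2
          omega
      rw [binomTail_succ_succ]
      have e1 := mul_le_mul_of_nonneg_left (ih' (m + 1)) (sub_nonneg.2 hp1)
      have e2 := mul_le_mul_of_nonneg_left (ih' m) hp0
      have e3 : μ.real {ω | numSuccesses A k ω = m} = μ.real {ω | numSuccesses A k ω < m + 1} -
          μ.real {ω | numSuccesses A k ω < m} := by linarith
      rw [e3] at hstep
      linarith

/-- if events `A 0, …, A (k-1)` are adapted to a filtration (each `A i` being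
`ℱ (i+1)`-measurable) and each has conditional probability at least `p` given `ℱ i`, then the
probability of fewer than `m` successes among the first `k` is at most the Binomial(k,p)
lower-tail probability. -/
theorem successes_dominate_binomial
    {Ω : Type*} {m0 : MeasurableSpace Ω} (μ : Measure Ω) [IsProbabilityMeasure μ]
    (ℱ : Filtration ℕ m0)
    (p : ℝ) (hp0 : 0 ≤ p) (hp1 : p ≤ 1)
    (k : ℕ) (A : ℕ → Set Ω)
    (hmeas : ∀ i < k, MeasurableSet[ℱ (i + 1)] (A i))
    (hcond : ∀ i < k, ∀ᵐ ω ∂μ,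
      p ≤ (μ[(A i).indicator (fun _ => (1 : ℝ)) | ℱ i]) ω)
    (m : ℕ) (hmk : m ≤ k) :
    μ {ω | ((Finset.range k).filter fun i => ω ∈ A i).card < m} ≤
      ENNReal.ofReal
        (∑ i ∈ Finset.range m, (k.choose i : ℝ) * p ^ i * (1 - p) ^ (k - i)) := by
  rw [← ofReal_measureReal]
  exact ENNReal.ofReal_le_ofReal
    (measureReal_numSuccesses_lt_le μ ℱ p hp0 hp1 A k hmeas hcond m)
end

section
/- Let f : ℝ^d × ℝ^D → ℝ^d be (K_x, K_u)-Lipschitz with K_x, K_u > 0, let u, u' ∈ ℝ^D, let h > 0, let ℓ ≥ 1 be a natural number, and define Euler sequences x_0, …, x_ℓ and x'_0, …, x'_ℓ in ℝ^d by x_i = x_{i−1} + h·f(x_{i−1}, u) and x'_i = x'_{i−1} + h·f(x'_{i−1}, u') for 1 ≤ i ≤ ℓ. Then, with T = ℓ·h, ‖x_ℓ − x'_ℓ‖ ≤ (1 + K_x h)^ℓ · ‖x_0 − x'_0‖ + K_u · T · e^{K_x T} · ‖u − u'‖. -/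
/-!
Write `q = 1 + Kx * h`. By the two Lipschitz bounds, one Euler step turns an error `e` into at most
`q * e + Ku * h * ‖u - u'‖`. Iterating this discrete Grönwall inequality gives
`q ^ n * ‖x 0 - x' 0‖ + n * (Ku * h * ‖u - u'‖) * q ^ n` after `n` steps, each power of `q` in the
geometric sum being bounded by `q ^ n`; finally `q ^ ℓ ≤ exp (Kx * (ℓ * h))` because
`1 + t ≤ exp t`.
-/

/-- Discrete Grönwall inequality, with the geometric sum `∑ i < n, q ^ i` estimated crudely by
`n * q ^ n`. -/
lemma discrete_gronwall_aux (e : ℕ → ℝ) (q c : ℝ) (hq : 1 ≤ q) (hc : 0 ≤ c) (ℓ : ℕ)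
    (hstep : ∀ i < ℓ, e (i + 1) ≤ q * e i + c) (n : ℕ) (hn : n ≤ ℓ) :
    e n ≤ q ^ n * e 0 + n * c * q ^ n := by
  induction n with
  | zero => simp
  | succ k ih =>
    have hmul := mul_le_mul_of_nonneg_left (ih (by omega)) (zero_le_one.trans hq)
    have hpow : c ≤ c * q ^ (k + 1) := le_mul_of_one_le_right hc (one_le_pow₀ hq)
    calc e (k + 1) ≤ q * e k + c := hstep k (by omega)
      _ ≤ q * (q ^ k * e 0 + k * c * q ^ k) + c * q ^ (k + 1) := add_le_add hmul hpow
      _ = q ^ (k + 1) * e 0 + (k + 1 : ℕ) * c * q ^ (k + 1) := by push_cast; ring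

/-- discrete (Euler) version of the perturbation bound.  Two Euler sequences with
step h, driven by constant controls u and u', satisfy
‖x_ℓ − x'_ℓ‖ ≤ (1 + K_x h)^ℓ ‖x_0 − x'_0‖ + K_u T e^{K_x T} ‖u − u'‖ with T = ℓh. -/
theorem euler_perturbation_bound (d D : ℕ)
    (f : EuclideanSpace ℝ (Fin d) → EuclideanSpace ℝ (Fin D) → EuclideanSpace ℝ (Fin d))
    (Kx Ku : ℝ) (hKx : 0 < Kx) (hKu : 0 < Ku)
    (hfu : ∀ (x : EuclideanSpace ℝ (Fin d)) (u u' : EuclideanSpace ℝ (Fin D)),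
      ‖f x u - f x u'‖ ≤ Ku * ‖u - u'‖)
    (hfx : ∀ (x x' : EuclideanSpace ℝ (Fin d)) (u : EuclideanSpace ℝ (Fin D)),
      ‖f x u - f x' u‖ ≤ Kx * ‖x - x'‖)
    (u u' : EuclideanSpace ℝ (Fin D)) (h : ℝ) (hh : 0 < h) (ℓ : ℕ) (hℓ : 1 ≤ ℓ)
    (x x' : ℕ → EuclideanSpace ℝ (Fin d))
    (hx : ∀ i < ℓ, x (i + 1) = x i + h • f (x i) u)
    (hx' : ∀ i < ℓ, x' (i + 1) = x' i + h • f (x' i) u') :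
    ‖x ℓ - x' ℓ‖ ≤ (1 + Kx * h) ^ ℓ * ‖x 0 - x' 0‖ +
      Ku * (ℓ * h) * Real.exp (Kx * (ℓ * h)) * ‖u - u'‖ := by
  have hstep : ∀ i < ℓ, ‖x (i + 1) - x' (i + 1)‖ ≤
      (1 + Kx * h) * ‖x i - x' i‖ + Ku * h * ‖u - u'‖ := by
    intro i hi
    -- Change the state at fixed control `u`, then the control at fixed state `x' i`.
    have hsplit : x (i + 1) - x' (i + 1) = (x i - x' i) +
        h • ((f (x i) u - f (x' i) u) + (f (x' i) u - f (x' i) u')) := by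
      rw [hx i hi, hx' i hi]
      module
    have hf : ‖(f (x i) u - f (x' i) u) + (f (x' i) u - f (x' i) u')‖ ≤
        Kx * ‖x i - x' i‖ + Ku * ‖u - u'‖ :=
      (norm_add_le _ _).trans (add_le_add (hfx _ _ _) (hfu _ _ _))
    calc ‖x (i + 1) - x' (i + 1)‖
        ≤ ‖x i - x' i‖ +
            h * ‖(f (x i) u - f (x' i) u) + (f (x' i) u - f (x' i) u')‖ := by
          rw [hsplit]
          refine (norm_add_le _ _).trans_eq ?_
          rw [norm_smul, Real.norm_of_nonneg hh.le]
      _ ≤ ‖x i - x' i‖ + h * (Kx * ‖x i - x' i‖ + Ku * ‖u - u'‖) := by gcongr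
      _ = (1 + Kx * h) * ‖x i - x' i‖ + Ku * h * ‖u - u'‖ := by ring
  have hq : 1 ≤ 1 + Kx * h := le_add_of_nonneg_right (by positivity)
  have hmain := discrete_gronwall_aux (fun i => ‖x i - x' i‖) (1 + Kx * h) (Ku * h * ‖u - u'‖)
    hq (by positivity) ℓ hstep ℓ le_rfl
  have hexp : (1 + Kx * h) ^ ℓ ≤ Real.exp (Kx * (ℓ * h)) := by
    calc (1 + Kx * h) ^ ℓ ≤ Real.exp (Kx * h) ^ ℓ := by
          gcongr
          linarith [Real.add_one_le_exp (Kx * h)]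
      _ = Real.exp (Kx * (ℓ * h)) := by
          rw [← Real.exp_nat_mul]
          ring_nf
  calc ‖x ℓ - x' ℓ‖ ≤ (1 + Kx * h) ^ ℓ * ‖x 0 - x' 0‖ +
        ℓ * (Ku * h * ‖u - u'‖) * (1 + Kx * h) ^ ℓ := hmain
    _ ≤ (1 + Kx * h) ^ ℓ * ‖x 0 - x' 0‖ +
        ℓ * (Ku * h * ‖u - u'‖) * Real.exp (Kx * (ℓ * h)) := by gcongr
    _ = _ := by ring
end

section
/- (Probability of a successful propagation step.) Let f : ℝ^d × ℝ^D → ℝ^d be (K_x, K_u)-Lipschitz with K_x, K_u > 0, and let Φ : ℝ^d × ℝ^D × [0,∞) → ℝ^d be the constant-control flow of f, i.e., Φ(x,u,0) = x and ∂Φ/∂t(x,u,t) = f(Φ(x,u,t), u) for all x, u, t. Let 𝕌 ⊆ ℝ^D be measurable with 0 < vol(𝕌) < ∞, let T_prop > 0, let u ∈ 𝕌, let 0 < t_π ≤ T_prop, and set π(t) = Φ(x_0, u, t) for some x_0 ∈ ℝ^d, with x_1 = π(t_π). Fix κ ∈ (0,1], δ > 0, ε ∈ (0, κδ), and δ₀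 ≥ 0 such that ρ := (κδ − ε − e^{K_x t_π}δ₀)/(K_u t_π e^{K_x t_π}) > 0 and B_ρ(u) ⊆ 𝕌. Let GoodT = {t ∈ [0, t_π] : ‖π(t) − x_1‖ ≤ ε} and let T_κ be its Lebesgue measure. Then for every x'_0 with ‖x'_0 − x_0‖ ≤ δ₀, the product of the uniform probability measure on [0, T_prop] and the uniform probability measure on 𝕌 assigns to the set {(t, u') : Φ(x'_0, u', t) ∈ B_{κδ}(x_1)} probability at least (T_κ / T_prop) · ζ_D ρ^D / vol(𝕌), where ζ_D is the Lebesgue measure of the unit ball in ℝ^D. -/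
/-!
By Grönwall's inequality, two constant-control trajectories whose initial states are `a` apart and
whose controls are `r` apart stay within `exp (Kx * T) * a + Ku * T * exp (Kx * T) * r` of each
other up to time `T`. The radius `ρ` is the value of `r` for which this bound, with `a = δ₀` and
`T = tπ`, equals `κ * δ - ε`. Let `G` be the set of `t ∈ [0, tπ]` at which the reference trajectory
is within `ε` of `x₁`. By the triangle inequality the success set contains the rectangle
`G ×ˢ closedBall u ρ`, and both factors lie in the supports `[0, Tprop]` and `𝕌` of
the uniform measures, so the measure of the rectangle is exactly the claimed lower bound.
-/

open Metric MeasureTheory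

/-- The uniform probability measure on a set `A`: normalized restricted Lebesgue measure. -/
noncomputable def unifMeasure {α : Type*} [MeasureSpace α] (A : Set α) : Measure α :=
  (volume A)⁻¹ • volume.restrict A

/-- Grönwall comparison of two trajectories `g`, `h` of `f` under the constant controls `v`, `u`. -/
lemma dist_trajectories_le {E F : Type*} [NormedAddCommGroup E] [NormedSpace ℝ E]
    [NormedAddCommGroup F] {f : E → F → E} {Kx Ku : ℝ} (hKx : 0 < Kx) (hKu : 0 < Ku)
    (hfu : ∀ x u u', ‖f x u - f x u'‖ ≤ Ku * ‖u - u'‖)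
    (hfx : ∀ x x' u, ‖f x u - f x' u‖ ≤ Kx * ‖x - x'‖)
    {g h : ℝ → E} {v u : F} {a r T t : ℝ}
    (hg : ∀ t ∈ Set.Ici (0 : ℝ), HasDerivWithinAt g (f (g t) v) (Set.Ici 0) t)
    (hh : ∀ t ∈ Set.Ici (0 : ℝ), HasDerivWithinAt h (f (h t) u) (Set.Ici 0) t)
    (h0 : ‖g 0 - h 0‖ ≤ a) (hvu : ‖v - u‖ ≤ r) (ht : t ∈ Set.Icc 0 T) :
    ‖g t - h t‖ ≤ Real.exp (Kx * T) * a + Ku * T * Real.exp (Kx * T) * r := by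
  have ha : 0 ≤ a := (norm_nonneg _).trans h0
  have hr : 0 ≤ r := (norm_nonneg _).trans hvu
  have hd : ∀ s ∈ Set.Ici (0 : ℝ),
      HasDerivWithinAt (fun s => g s - h s) (f (g s) v - f (h s) u) (Set.Ici 0) s :=
    fun s hs => (hg s hs).sub (hh s hs)
  have key := norm_le_gronwallBound_of_norm_deriv_right_le (f := fun s => g s - h s)
    (f' := fun s => f (g s) v - f (h s) u) (δ := a) (K := Kx) (ε := Ku * r) (a := 0) (b := T)
    (fun s hs => (hd s hs.1).continuousWithinAt.mono fun x hx => hx.1)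
    (fun s hs => (hd s hs.1).mono (Set.Ici_subset_Ici.2 hs.1)) h0
    (fun s _ => by
      calc ‖f (g s) v - f (h s) u‖
          = ‖(f (g s) v - f (h s) v) + (f (h s) v - f (h s) u)‖ := by congr 1; abel
        _ ≤ Kx * ‖g s - h s‖ + Ku * ‖v - u‖ :=
            (norm_add_le _ _).trans (add_le_add (hfx _ _ _) (hfu _ _ _))
        _ ≤ Kx * ‖g s - h s‖ + Ku * r := by gcongr)
  have hT : 0 ≤ T := ht.1.trans ht.2
  have hmono := gronwallBound_mono ha (mul_nonneg hKu.le hr) hKx.le ht.2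
  have htb := key t ht
  rw [sub_zero] at htb
  refine (htb.trans hmono).trans ?_
  rw [gronwallBound_of_K_ne_0 hKx.ne.symm]
  -- `exp y - 1 ≤ y * exp y`, which is `1 - y ≤ exp (-y)` multiplied by `exp y`
  have hexp : Real.exp (Kx * T) - 1 ≤ Kx * T * Real.exp (Kx * T) := by
    have h1 := Real.add_one_le_exp (-(Kx * T))
    have h2 : Real.exp (-(Kx * T)) * Real.exp (Kx * T) = 1 := by
      rw [← Real.exp_add, neg_add_cancel, Real.exp_zero]
    nlinarith [mul_le_mul_of_nonneg_right h1 (Real.exp_pos (Kx * T)).le]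
  have h3 : Ku * r / Kx * (Real.exp (Kx * T) - 1)
      ≤ Ku * r / Kx * (Kx * T * Real.exp (Kx * T)) := by gcongr
  have h4 : Ku * r / Kx * (Kx * T * Real.exp (Kx * T)) = Ku * T * Real.exp (Kx * T) * r := by
    field_simp
  linarith

lemma unifMeasure_apply_of_subset {α : Type*} [MeasureSpace α] {A B : Set α}
    (hBA : B ⊆ A) :
    unifMeasure A B = (volume A)⁻¹ * volume B := by
  rw [unifMeasure, Measure.smul_apply, Measure.restrict_eq_self _ hBA, smul_eq_mul]

/-- probability of a successful propagation step.  Drawing the duration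
uniformly from [0, T_prop] and the control uniformly from 𝕌, the probability that the state
propagated from x'₀ (with ‖x'₀ − x₀‖ ≤ δ₀) lands in the ball of radius κδ around
x₁ = π(t_π) is at least (T_κ/T_prop)·ζ_D ρ^D / vol(𝕌). -/
theorem propagation_success_probability (d D : ℕ)
    (f : EuclideanSpace ℝ (Fin d) → EuclideanSpace ℝ (Fin D) → EuclideanSpace ℝ (Fin d))
    (Kx Ku : ℝ) (hKx : 0 < Kx) (hKu : 0 < Ku)
    (hfu : ∀ (x : EuclideanSpace ℝ (Fin d)) (u u' : EuclideanSpace ℝ (Fin D)),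
      ‖f x u - f x u'‖ ≤ Ku * ‖u - u'‖)
    (hfx : ∀ (x x' : EuclideanSpace ℝ (Fin d)) (u : EuclideanSpace ℝ (Fin D)),
      ‖f x u - f x' u‖ ≤ Kx * ‖x - x'‖)
    (Φ : EuclideanSpace ℝ (Fin d) → EuclideanSpace ℝ (Fin D) → ℝ →
      EuclideanSpace ℝ (Fin d))
    (hΦ0 : ∀ x u, Φ x u 0 = x)
    (hΦ' : ∀ x u, ∀ t ∈ Set.Ici (0 : ℝ),
      HasDerivWithinAt (Φ x u) (f (Φ x u t) u) (Set.Ici 0) t)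
    (𝕌 : Set (EuclideanSpace ℝ (Fin D))) (h𝕌meas : MeasurableSet 𝕌)
    (h𝕌pos : 0 < volume 𝕌) (h𝕌fin : volume 𝕌 < ⊤)
    (Tprop : ℝ) (hTprop : 0 < Tprop)
    (u : EuclideanSpace ℝ (Fin D)) (hu : u ∈ 𝕌)
    (tπ : ℝ) (htπ0 : 0 < tπ) (htπ : tπ ≤ Tprop)
    (x₀ x₁ : EuclideanSpace ℝ (Fin d)) (hx₁ : x₁ = Φ x₀ u tπ)
    (κ δ ε δ₀ ρ : ℝ) (hκ0 : 0 < κ) (hκ1 : κ ≤ 1) (hδ : 0 < δ)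
    (hε0 : 0 < ε) (hε : ε < κ * δ) (hδ₀ : 0 ≤ δ₀)
    (hρ : ρ = (κ * δ - ε - Real.exp (Kx * tπ) * δ₀) / (Ku * tπ * Real.exp (Kx * tπ)))
    (hρpos : 0 < ρ) (hρball : closedBall u ρ ⊆ 𝕌)
    (Tκ : ℝ)
    (hTκ : Tκ = (volume {t ∈ Set.Icc 0 tπ | ‖Φ x₀ u t - x₁‖ ≤ ε}).toReal) :
    ∀ x₀' : EuclideanSpace ℝ (Fin d), ‖x₀' - x₀‖ ≤ δ₀ →
      ENNReal.ofReal ((Tκ / Tprop) *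
          ((volume (closedBall (0 : EuclideanSpace ℝ (Fin D)) 1)).toReal * ρ ^ D /
            (volume 𝕌).toReal)) ≤
        ((unifMeasure (Set.Icc (0 : ℝ) Tprop)).prod (unifMeasure 𝕌))
          {p : ℝ × EuclideanSpace ℝ (Fin D) | Φ x₀' p.2 p.1 ∈ closedBall x₁ (κ * δ)} := by
  intro x₀' hx₀'
  set G : Set ℝ := {t ∈ Set.Icc 0 tπ | ‖Φ x₀ u t - x₁‖ ≤ ε} with hG
  have hGsub : G ⊆ Set.Icc 0 Tprop := fun t ht => ⟨ht.1.1, ht.1.2.trans htπ⟩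
  have hGfin : volume G ≠ ⊤ :=
    ((measure_mono hGsub).trans_lt measure_Icc_lt_top).ne
  have hsub : G ×ˢ closedBall u ρ ⊆
      {p : ℝ × EuclideanSpace ℝ (Fin D) | Φ x₀' p.2 p.1 ∈ closedBall x₁ (κ * δ)} := by
    rintro ⟨t, v⟩ ⟨ht, hv⟩
    have h1 := dist_trajectories_le (a := δ₀) hKx hKu hfu hfx (hΦ' x₀' v) (hΦ' x₀ u)
      (by rwa [hΦ0, hΦ0]) (mem_closedBall_iff_norm.1 hv) ht.1
    have h2 : Ku * tπ * Real.exp (Kx * tπ) * ρ = κ * δ - ε - Real.exp (Kx * tπ) * δ₀ := by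
      rw [hρ]
      have := Real.exp_pos (Kx * tπ)
      field_simp
    have h3 := norm_sub_le_norm_sub_add_norm_sub (Φ x₀' v t) (Φ x₀ u t) x₁
    have h4 : ‖Φ x₀ u t - x₁‖ ≤ ε := ht.2
    exact mem_closedBall_iff_norm.2 (by dsimp only at *; linarith)
  refine le_trans (le_of_eq ?_) (measure_mono hsub)
  have : SFinite (unifMeasure 𝕌) := by unfold unifMeasure; infer_instance
  rw [Measure.prod_prod, unifMeasure_apply_of_subset hGsub,
    unifMeasure_apply_of_subset hρball, Real.volume_Icc, sub_zero,
    Measure.addHaar_closedBall' _ _ hρpos.le, finrank_euclideanSpace_fin, hTκ]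
  have hU : 0 < (volume 𝕌).toReal := ENNReal.toReal_pos h𝕌pos.ne' h𝕌fin.ne
  have hB : volume (closedBall (0 : EuclideanSpace ℝ (Fin D)) 1) ≠ ⊤ :=
    measure_closedBall_lt_top.ne
  rw [ENNReal.ofReal_mul (by positivity), ENNReal.ofReal_div_of_pos hTprop,
    ENNReal.ofReal_div_of_pos hU, ENNReal.ofReal_mul ENNReal.toReal_nonneg,
    ENNReal.ofReal_toReal hGfin, ENNReal.ofReal_toReal hB, ENNReal.ofReal_toReal h𝕌fin.ne,
    div_eq_mul_inv, div_eq_mul_inv]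
  ring
end

section
/- Let X ⊆ ℝ^d be measurable with 0 < vol(X) < ∞, let S ⊆ ℝ^d be a finite nonempty set, let δ > 0 and x ∈ ℝ^d with B_{δ/5}(x) ⊆ X, and suppose there exists v ∈ S with ‖v − x‖ ≤ 2δ/5. Let NN be a nearest-neighbor selector. Then, for a point q drawn uniformly at random from X, the probability that ‖NN(S, q) − x‖ ≤ δ is at least vol(B_{δ/5}(x))/vol(X), i.e., at least ζ_d (δ/5)^d / vol(X), where ζ_d is the Lebesgue measure of the unit ball in ℝ^d. -/
/-!
If `q` lies within `δ / 5` of `x`, then the nearest neighbor of `q` is no farther from `q` than `v`,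
which is within `2δ/5 + δ/5` of `q`; hence it is within `4δ/5 ≤ δ` of `x`. So the event contains
the ball `closedBall x (δ / 5)`, which lies in `X`, and monotonicity of the volume gives the bound.
The explicit form is the scaling law `Measure.addHaar_closedBall'` for volumes of balls.
-/

open Metric MeasureTheory

/-- for a uniform random sample q from X, if some vertex of S lies within 2δ/5
of x and B_{δ/5}(x) ⊆ X, then the probability that the nearest neighbor of q in S lies within
δ of x is at least vol(B_{δ/5}(x))/vol(X) = ζ_d (δ/5)^d / vol(X). -/
theorem nearest_neighbor_in_ball_probability (d : ℕ)
    (X : Set (EuclideanSpace ℝ (Fin d))) (hXmeas : MeasurableSet X)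
    (hXpos : 0 < volume X) (hXfin : volume X < ⊤)
    (S : Finset (EuclideanSpace ℝ (Fin d))) (hS : S.Nonempty)
    (δ : ℝ) (hδ : 0 < δ) (x : EuclideanSpace ℝ (Fin d))
    (hball : closedBall x (δ / 5) ⊆ X)
    (v : EuclideanSpace ℝ (Fin d)) (hvS : v ∈ S) (hv : ‖v - x‖ ≤ 2 * δ / 5)
    (NN : Finset (EuclideanSpace ℝ (Fin d)) → EuclideanSpace ℝ (Fin d) →
      EuclideanSpace ℝ (Fin d))
    (hNN : ∀ (T : Finset (EuclideanSpace ℝ (Fin d))), T.Nonempty →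
      ∀ q, NN T q ∈ T ∧ ∀ z ∈ T, ‖NN T q - q‖ ≤ ‖z - q‖) :
    volume (closedBall x (δ / 5)) / volume X ≤
        unifMeasure X {q | ‖NN S q - x‖ ≤ δ} ∧
    ENNReal.ofReal
        ((volume (closedBall (0 : EuclideanSpace ℝ (Fin d)) 1)).toReal * (δ / 5) ^ d) /
        volume X ≤
      unifMeasure X {q | ‖NN S q - x‖ ≤ δ} := by
  have hsub : closedBall x (δ / 5) ⊆ {q | ‖NN S q - x‖ ≤ δ} ∩ X := by
    intro q hq
    refine ⟨?_, hball hq⟩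
    have hqx : ‖q - x‖ ≤ δ / 5 := by simpa [dist_eq_norm] using hq
    -- Chaining the next three bounds gives `‖NN S q - x‖ ≤ ‖v - x‖ + 2 ‖q - x‖ ≤ 4δ/5`.
    have h1 : ‖NN S q - q‖ ≤ ‖v - q‖ := (hNN S hS q).2 v hvS
    have h2 : ‖v - q‖ ≤ ‖v - x‖ + ‖q - x‖ := by
      simpa only [dist_eq_norm] using dist_triangle_right v q x
    have h3 : ‖NN S q - x‖ ≤ ‖NN S q - q‖ + ‖q - x‖ := norm_sub_le_norm_sub_add_norm_sub _ _ _
    change ‖NN S q - x‖ ≤ δ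
    linarith
  have key : volume (closedBall x (δ / 5)) / volume X ≤
      unifMeasure X {q | ‖NN S q - x‖ ≤ δ} := by
    -- The event need not be measurable, as `NN` is arbitrary; measurability of `X` suffices.
    rw [unifMeasure, Measure.smul_apply, smul_eq_mul, Measure.restrict_apply' hXmeas,
      ENNReal.div_eq_inv_mul]
    gcongr
  have hvol : ENNReal.ofReal
      ((volume (closedBall (0 : EuclideanSpace ℝ (Fin d)) 1)).toReal * (δ / 5) ^ d) =
      volume (closedBall x (δ / 5)) := by
    rw [Measure.addHaar_closedBall' volume x (by positivity : (0 : ℝ) ≤ δ / 5),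
      finrank_euclideanSpace_fin, ENNReal.ofReal_mul ENNReal.toReal_nonneg,
      ENNReal.ofReal_toReal measure_closedBall_lt_top.ne, mul_comm]
  exact ⟨key, hvol ▸ key⟩
end

section
/- (Probabilistic completeness of kinodynamic RRT with forward propagation.) Let X ⊆ ℝ^d be measurable with 0 < vol(X) < ∞, let F ⊆ X be the free space, let 𝕌 ⊆ ℝ^D be measurable with 0 < vol(𝕌) < ∞, let f : ℝ^d × ℝ^D → ℝ^d be (K_x, K_u)-Lipschitz with K_x, K_u > 0, and let Φ : ℝ^d × ℝ^D × [0,∞) → ℝ^d be the constant-control flow of f, i.e., Φ(x,u,0) = x and ∂Φ/∂t(x,u,t) = f(Φ(x,u,t), u) for all x, u, t. Fix x_init ∈ F, T_prop > 0, a nearest-neighbor selector NN, and a goal region B_{δ_goal}(x_goal) ⊆ F with δ_goal > 0. The kinodynamic RRT process uses an i.i.d. sequence ω_i = (q_i, t_i, u_i), i ∈ ℕ, with q_i uniform on X, t_i uniform on [0, T_prop], and u_i uniform on 𝕌, all independent; its vertex sets are V_0 = {x_init} and, at step i, x_near = NN(V_i, q_i), x_new = Φ(x_near, u_i, t_i),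 with V_{i+1} = V_i ∪ {x_new} if Φ(x_near, u_i, s) ∈ F for all s ∈ [0, t_i], and V_{i+1} = V_i otherwise. Assume there exists a trajectory π : [0, t_π] → F with π(0) = x_init and π(t_π) = x_goal generated by a piecewise constant control function: there is a partition 0 = s_0 < s_1 < ⋯ < s_N = t_π and controls ū_1, …, ū_N ∈ 𝕌, each lying in 𝕌 together with a closed ball of some positive radius around it, such that π(s) = Φ(π(s_{j−1}), ū_j, s − s_{j−1}) for s ∈ [s_{j−1}, s_j]. Assume further that π has clearance δ_clear > 0, i.e., B_{δ_clear}(π(t)) ⊆ F for all t ∈ [0, t_π]. Then there exist constants a', b' > 0 such that for every k ∈ ℕ, the (outer) probability that V_k contains no vertex v with ‖v − x_goal‖ < δ_goal is at most a'·e^{−b'k}. -/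
/-!
The reference trajectory is cut into finitely many arcs, each driven by one constant control and
of duration at most `Tprop`. By Grönwall's inequality the flow depends continuously on the initial
state and the control, uniformly along an arc. Hence for every radius `R` around the end `y` of an
arc there is a radius `r` around its start `x` such that, whenever the tree has a vertex `r`-close
to `x`, a sample `(q, t, u)` with `q` near `x`, `t` near the arc's duration and `u` near the arc's
control creates a vertex `R`-close to `y`: the nearest neighbor of `q` is within `2‖q - x‖ + r`
of `x`, and clearance keeps the propagated path in `F`. Such samples form a product of
sets of positive measure (`steer_arc`). Working backwards from the goal, the radii may shrink by
any factor at each arc, because the tree contains `xinit` itself, so no contraction of the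
dynamics is needed.

This yields a finite chain of target sets leading from a ball around `xinit` to the goal region,
in which a fixed positive-probability set of samples moves the tree from one target to the next.
If the tree misses the next target `G'` at time `k`, then either it misses the current target `G`
at time `⌊k/2⌋`, or none of the samples in between lies in the good set. The second event is a
measurable cylinder of exponentially small probability, so exponential decay passes from `G` to
`G'` (`exp_decay_of_forces`). Only outer measure of the miss events is ever used.
-/

open Metric MeasureTheory

attribute [local instance] Classical.propDecidable

/-- The kinodynamic RRT vertex sets with forward propagation.  At step `i` the sample
`ω i = (q, t, u)` is drawn; the nearest neighbor `x_near` of `q` in the current vertex set is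
computed by the selector `NN`; the control `u` is forward propagated from `x_near` for
duration `t` via the flow `Φ`, and the endpoint is added as a new vertex provided the whole
propagated trajectory stays in the free space `F`. -/
noncomputable def kinoRRT (d D : ℕ) (F : Set (EuclideanSpace ℝ (Fin d)))
    (xinit : EuclideanSpace ℝ (Fin d))
    (NN : Finset (EuclideanSpace ℝ (Fin d)) → EuclideanSpace ℝ (Fin d) →
      EuclideanSpace ℝ (Fin d))
    (Φ : EuclideanSpace ℝ (Fin d) → EuclideanSpace ℝ (Fin D) → ℝ →
      EuclideanSpace ℝ (Fin d))
    (ω : ℕ → EuclideanSpace ℝ (Fin d) × ℝ × EuclideanSpace ℝ (Fin D)) :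
    ℕ → Finset (EuclideanSpace ℝ (Fin d))
  | 0 => {xinit}
  | i + 1 =>
      let V := kinoRRT d D F xinit NN Φ ω i
      let xnear := NN V (ω i).1
      let xnew := Φ xnear (ω i).2.2 (ω i).2.1
      if ∀ s ∈ Set.Icc 0 (ω i).2.1, Φ xnear (ω i).2.2 s ∈ F then insert xnew V else V

/-! ### Chains of forced targets -/

/-- One iteration of the kinodynamic RRT on the vertex set `V` with the sample `a = (q, t, u)`. -/
noncomputable def rrtStep {d D : ℕ} (F : Set (EuclideanSpace ℝ (Fin d)))
    (NN : Finset (EuclideanSpace ℝ (Fin d)) → EuclideanSpace ℝ (Fin d) →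
      EuclideanSpace ℝ (Fin d))
    (Φ : EuclideanSpace ℝ (Fin d) → EuclideanSpace ℝ (Fin D) → ℝ →
      EuclideanSpace ℝ (Fin d))
    (V : Finset (EuclideanSpace ℝ (Fin d)))
    (a : EuclideanSpace ℝ (Fin d) × ℝ × EuclideanSpace ℝ (Fin D)) :
    Finset (EuclideanSpace ℝ (Fin d)) :=
  if ∀ s ∈ Set.Icc 0 a.2.1, Φ (NN V a.1) a.2.2 s ∈ F
    then insert (Φ (NN V a.1) a.2.2 a.2.1) V else V

/-- `Forces ν step G G'`: there is a set of samples of positive `ν`-measure, not depending on the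
vertex set, each of which turns any vertex set meeting `G` into one meeting `G'`. -/
def Forces {E S : Type*} [MeasurableSpace S] (ν : Measure S) (step : Finset E → S → Finset E)
    (G G' : Set E) : Prop :=
  ∃ A : Set S, MeasurableSet A ∧ ν A ≠ 0 ∧
    ∀ V : Finset E, ∀ v ∈ V, v ∈ G → ∀ a ∈ A, ∃ w ∈ step V a, w ∈ G'

/-- Every ball around `y` can be reached, through a finite chain of forced targets, from some ball
around `x`. -/
def Steer {E S : Type*} [PseudoMetricSpace E] [MeasurableSpace S] (ν : Measure S)
    (step : Finset E → S → Finset E) (x y : E) : Prop :=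
  ∀ R > 0, ∃ r > 0, Relation.ReflTransGen (Forces ν step) (ball x r) (ball y R)

lemma Steer.refl {E S : Type*} [PseudoMetricSpace E] [MeasurableSpace S] {ν : Measure S}
    {step : Finset E → S → Finset E} (x : E) : Steer ν step x x :=
  fun R hR => ⟨R, hR, .refl⟩

lemma Steer.trans {E S : Type*} [PseudoMetricSpace E] [MeasurableSpace S] {ν : Measure S}
    {step : Finset E → S → Finset E} {x y z : E} (h₁ : Steer ν step x y)
    (h₂ : Steer ν step y z) : Steer ν step x z := by
  intro R hR
  obtain ⟨r, hr, h⟩ := h₂ R hR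
  obtain ⟨r', hr', h'⟩ := h₁ r hr
  exact ⟨r', hr', h'.trans h⟩

/-! ### Exponential decay along a chain -/

/-- Waiting half of the time for `G` and the other half for a good sample: exponential decay of
the probability of missing a target passes along `Forces`. -/
lemma exp_decay_of_forces {E S : Type*} [MeasurableSpace S] {ν : Measure S}
    {step : Finset E → S → Finset E} (μ : Measure (ℕ → S)) [IsProbabilityMeasure μ]
    (hμ : ∀ (I : Finset ℕ) (B : ℕ → Set S), (∀ i ∈ I, MeasurableSet (B i)) →
      μ {ω | ∀ i ∈ I, ω i ∈ B i} = ∏ i ∈ I, ν (B i))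
    (V : (ℕ → S) → ℕ → Finset E) (hV : ∀ ω i, V ω (i + 1) = step (V ω i) (ω i))
    (hmono : ∀ ω, Monotone (V ω)) {G G' : Set E} (hG : Forces ν step G G')
    (h : ∃ a b : ℝ, 0 < a ∧ 0 < b ∧ ∀ k : ℕ,
      μ {ω | ∀ v ∈ V ω k, v ∉ G} ≤ ENNReal.ofReal (a * Real.exp (-b * k))) :
    ∃ a b : ℝ, 0 < a ∧ 0 < b ∧ ∀ k : ℕ,
      μ {ω | ∀ v ∈ V ω k, v ∉ G'} ≤ ENNReal.ofReal (a * Real.exp (-b * k)) := by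
  obtain ⟨A, hA, hA0, hstep⟩ := hG
  obtain ⟨a, b, ha, hb, hab⟩ := h
  have hν : IsProbabilityMeasure ν := by
    constructor
    have := hμ {0} (fun _ => Set.univ) (by simp)
    simpa using this.symm
  set p : ℝ := ν.real A with hp
  have hp0 : 0 < p := by
    rw [hp, measureReal_def]
    exact ENNReal.toReal_pos hA0 (measure_ne_top _ _)
  have hAc : ν Aᶜ ≤ ENNReal.ofReal (Real.exp (-p)) := by
    rw [← ofReal_measureReal, probReal_compl_eq_one_sub hA]
    exact ENNReal.ofReal_le_ofReal (by linarith [Real.add_one_le_exp (-p)])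
  -- `⌊k/2⌋ ≥ (k - 1)/2` accounts for the factor `exp (b / 2)`.
  refine ⟨a * Real.exp (b / 2) + 1, min b p / 2, by positivity, by positivity, fun k => ?_⟩
  set m := k / 2 with hm
  have hsub : {ω | ∀ v ∈ V ω k, v ∉ G'} ⊆
      {ω | ∀ v ∈ V ω m, v ∉ G} ∪ {ω | ∀ i ∈ Finset.Ico m k, ω i ∈ Aᶜ} := by
    intro ω hω
    by_contra hcon
    simp only [Set.mem_union, Set.mem_ofPred_eq, not_or, not_forall, not_not, Set.mem_compl_iff]
      at hcon
    obtain ⟨⟨v, hv, hvG⟩, i, hi, hiA⟩ := hcon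
    rw [Finset.mem_Ico] at hi
    obtain ⟨w, hw, hwG⟩ := hstep (V ω i) v (hmono ω hi.1 hv) hvG (ω i) hiA
    rw [← hV] at hw
    exact hω w (hmono ω hi.2 hw) hwG
  have h2 : μ {ω | ∀ i ∈ Finset.Ico m k, ω i ∈ Aᶜ}
      ≤ ENNReal.ofReal (Real.exp (-p * ((k - m : ℕ) : ℝ))) := by
    rw [hμ _ (fun _ => Aᶜ) (fun _ _ => hA.compl), Finset.prod_const, Nat.card_Ico]
    calc ν Aᶜ ^ (k - m) ≤ ENNReal.ofReal (Real.exp (-p)) ^ (k - m) := by gcongr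
      _ = _ := by
        rw [← ENNReal.ofReal_pow (Real.exp_nonneg _), ← Real.exp_nat_mul, mul_comm]
  have hm1 : (k : ℝ) ≤ 2 * m + 1 := by
    have : k ≤ 2 * m + 1 := by omega
    exact_mod_cast this
  have hm2 : (k : ℝ) ≤ 2 * ((k - m : ℕ) : ℝ) := by
    have : k ≤ 2 * (k - m) := by omega
    exact_mod_cast this
  have hk : (0 : ℝ) ≤ k := k.cast_nonneg
  have e1 : Real.exp (-b * m) ≤ Real.exp (b / 2) * Real.exp (-(min b p / 2) * k) := by
    rw [← Real.exp_add]
    apply Real.exp_le_exp.2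
    nlinarith [min_le_left b p]
  have e2 : Real.exp (-p * ((k - m : ℕ) : ℝ)) ≤ Real.exp (-(min b p / 2) * k) := by
    apply Real.exp_le_exp.2
    nlinarith [min_le_right b p]
  calc μ {ω | ∀ v ∈ V ω k, v ∉ G'}
      ≤ μ {ω | ∀ v ∈ V ω m, v ∉ G} + μ {ω | ∀ i ∈ Finset.Ico m k, ω i ∈ Aᶜ} :=
        (measure_mono hsub).trans (measure_union_le _ _)
    _ ≤ ENNReal.ofReal (a * Real.exp (-b * m))
        + ENNReal.ofReal (Real.exp (-p * ((k - m : ℕ) : ℝ))) := add_le_add (hab m) h2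
    _ = ENNReal.ofReal (a * Real.exp (-b * m) + Real.exp (-p * ((k - m : ℕ) : ℝ))) :=
        (ENNReal.ofReal_add (by positivity) (by positivity)).symm
    _ ≤ _ := ENNReal.ofReal_le_ofReal (by nlinarith)

/-! ### Uniform measures -/

instance {α : Type*} [MeasureSpace α] [SFinite (volume : Measure α)] (A : Set α) :
    SFinite (unifMeasure A) := by
  unfold unifMeasure; infer_instance

lemma unifMeasure_ne_zero {α : Type*} [MeasureSpace α] {A B : Set α}
    (hA : volume A < ⊤) (hB : volume B ≠ 0) (hBA : B ⊆ A) : unifMeasure A B ≠ 0 := by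
  rw [unifMeasure, Measure.smul_apply, smul_eq_mul, Measure.restrict_eq_self _ hBA]
  exact mul_ne_zero (ENNReal.inv_ne_zero.2 hA.ne) hB

/-! ### Steering along the reference trajectory -/

/-- Continuous dependence of the flow on the initial state and the control, uniform along an arc
`τ ↦ Φ x₀ u₀ (c + τ)`, `0 ≤ τ ≤ h`, of a reference solution. -/
lemma flow_close {E U : Type*} [NormedAddCommGroup E] [NormedSpace ℝ E]
    [NormedAddCommGroup U] {f : E → U → E} {Kx Ku : ℝ} (hKx : 0 < Kx) (hKu : 0 < Ku)
    (hfu : ∀ x u u', ‖f x u - f x u'‖ ≤ Ku * ‖u - u'‖)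
    (hfx : ∀ x x' u, ‖f x u - f x' u‖ ≤ Kx * ‖x - x'‖)
    {Φ : E → U → ℝ → E} (hΦ0 : ∀ x u, Φ x u 0 = x)
    (hΦ' : ∀ x u, ∀ t ∈ Set.Ici (0 : ℝ),
      HasDerivWithinAt (Φ x u) (f (Φ x u t) u) (Set.Ici 0) t)
    (x₀ : E) (u₀ : U) {c h : ℝ} (hc : 0 ≤ c) {ε : ℝ} (hε : 0 < ε) :
    ∃ r > 0, ∀ z u, ‖z - Φ x₀ u₀ c‖ ≤ r → ‖u - u₀‖ ≤ r → ∀ t ∈ Set.Icc 0 h,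
      ‖Φ z u t - Φ x₀ u₀ (c + t)‖ ≤ ε := by
  set C : ℝ := Real.exp (Kx * h) * (1 + Ku / Kx) with hC
  have hC0 : 0 < C := by positivity
  refine ⟨ε / C, by positivity, fun z u hz hu t ht => ?_⟩
  set r := ε / C with hr
  have hr0 : 0 < r := by positivity
  have hd : ∀ t ∈ Set.Ici (0 : ℝ), HasDerivWithinAt (fun t => Φ x₀ u₀ (c + t))
      (f (Φ x₀ u₀ (c + t)) u₀) (Set.Ici 0) t := by
    intro t ht
    have ht' : (0 : ℝ) ≤ t := ht
    have h1 := hΦ' x₀ u₀ (c + t) (add_nonneg hc ht')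
    have h2 : HasDerivWithinAt (fun t : ℝ => c + t) 1 (Set.Ici 0) t :=
      (hasDerivWithinAt_id t _).const_add c
    have := h1.scomp t h2 (fun s hs => add_nonneg hc hs)
    rw [one_smul] at this
    exact this
  have key := dist_le_of_approx_trajectories_ODE (v := fun _ x => f x u₀) (K := Kx.toNNReal)
    (f := Φ z u) (g := fun t => Φ x₀ u₀ (c + t)) (f' := fun t => f (Φ z u t) u)
    (g' := fun t => f (Φ x₀ u₀ (c + t)) u₀) (a := 0) (b := h) (εf := Ku * r) (εg := 0) (δ := r)
    (fun _ => LipschitzWith.of_dist_le_mul fun x y => by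
      simpa [dist_eq_norm, hKx.le] using hfx x y u₀)
    (fun s hs => ((hΦ' z u s hs.1).continuousWithinAt).mono fun _ h => h.1)
    (fun s hs => (hΦ' z u s hs.1).mono (Set.Ici_subset_Ici.2 hs.1))
    (fun s hs => by
      rw [dist_eq_norm]
      exact (hfu _ _ _).trans (by gcongr))
    (fun s hs => ((hd s hs.1).continuousWithinAt).mono fun _ h => h.1)
    (fun s hs => (hd s hs.1).mono (Set.Ici_subset_Ici.2 hs.1))
    (fun s hs => by simp)
    (by simpa [dist_eq_norm, hΦ0] using hz) t ht
  rw [dist_eq_norm] at key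
  refine key.trans ?_
  rw [Real.coe_toNNReal _ hKx.le, gronwallBound_of_K_ne_0 hKx.ne']
  have hexp : Real.exp (Kx * (t - 0)) ≤ Real.exp (Kx * h) :=
    Real.exp_le_exp.2 (by rw [sub_zero]; exact mul_le_mul_of_nonneg_left ht.2 hKx.le)
  have hrC : r * C = ε := by rw [hr]; field_simp
  calc r * Real.exp (Kx * (t - 0)) + (Ku * r + 0) / Kx * (Real.exp (Kx * (t - 0)) - 1)
      ≤ r * Real.exp (Kx * h) + (Ku * r + 0) / Kx * Real.exp (Kx * h) := by
        gcongr
        linarith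
    _ = r * C := by rw [hC]; ring
    _ = ε := hrC

section Arc

variable {d D : ℕ} {X F : Set (EuclideanSpace ℝ (Fin d))} {𝕌 : Set (EuclideanSpace ℝ (Fin D))}
  {f : EuclideanSpace ℝ (Fin d) → EuclideanSpace ℝ (Fin D) → EuclideanSpace ℝ (Fin d)}
  {Kx Ku Tprop : ℝ}
  {Φ : EuclideanSpace ℝ (Fin d) → EuclideanSpace ℝ (Fin D) → ℝ → EuclideanSpace ℝ (Fin d)}
  {NN : Finset (EuclideanSpace ℝ (Fin d)) → EuclideanSpace ℝ (Fin d) →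
      EuclideanSpace ℝ (Fin d)}
  {x₀ : EuclideanSpace ℝ (Fin d)} {u₀ : EuclideanSpace ℝ (Fin D)}

/-- A single sample can move the tree along an arc with constant control and duration
`h ≤ Tprop`. -/
lemma steer_arc (hXfin : volume X < ⊤) (hFX : F ⊆ X) (h𝕌fin : volume 𝕌 < ⊤)
    (hKx : 0 < Kx) (hKu : 0 < Ku)
    (hfu : ∀ x u u', ‖f x u - f x u'‖ ≤ Ku * ‖u - u'‖)
    (hfx : ∀ x x' u, ‖f x u - f x' u‖ ≤ Kx * ‖x - x'‖)
    (hΦ0 : ∀ x u, Φ x u 0 = x)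
    (hΦ' : ∀ x u, ∀ t ∈ Set.Ici (0 : ℝ),
      HasDerivWithinAt (Φ x u) (f (Φ x u t) u) (Set.Ici 0) t)
    (hNN : ∀ (S : Finset (EuclideanSpace ℝ (Fin d))), S.Nonempty →
      ∀ q, NN S q ∈ S ∧ ∀ z ∈ S, ‖NN S q - q‖ ≤ ‖z - q‖)
    {c h : ℝ} (hc : 0 ≤ c) (hh : 0 < h) (hhT : h ≤ Tprop)
    {ρ δ : ℝ} (hρ : 0 < ρ) (hρU : closedBall u₀ ρ ⊆ 𝕌)
    (hδ : 0 < δ) (hclear : ∀ t ∈ Set.Icc 0 h, closedBall (Φ x₀ u₀ (c + t)) δ ⊆ F) :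
    Steer ((unifMeasure X).prod
      ((unifMeasure (Set.Icc (0 : ℝ) Tprop)).prod (unifMeasure 𝕌)))
      (rrtStep F NN Φ) (Φ x₀ u₀ c) (Φ x₀ u₀ (c + h)) := by
  intro R hR
  obtain ⟨r, hr, hclose⟩ := flow_close hKx hKu hfu hfx hΦ0 hΦ' x₀ u₀ hc (h := h)
    (ε := min (R / 3) δ) (by positivity)
  -- The reference arc moves little during the last `η` units of time.
  obtain ⟨η, hη, hηh, hcont⟩ : ∃ η > 0, η ≤ h ∧ ∀ t ∈ Set.Icc (h - η) h,
      ‖Φ x₀ u₀ (c + t) - Φ x₀ u₀ (c + h)‖ ≤ R / 3 := by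
    have hcw := (hΦ' x₀ u₀ (c + h) (add_nonneg hc hh.le)).continuousWithinAt
    obtain ⟨η, hη, hball⟩ := Metric.continuousWithinAt_iff.1 hcw (R / 3) (by positivity)
    refine ⟨min (η / 2) h, by positivity, min_le_right _ _, fun t ht => ?_⟩
    have h1 := min_le_left (η / 2) h
    have h2 := min_le_right (η / 2) h
    have := hball (x := c + t) (by simp only [Set.mem_Ici]; linarith [ht.1])
      (by rw [Real.dist_eq, abs_lt]; constructor <;> linarith [ht.1, ht.2])
    rw [dist_eq_norm] at this
    exact this.le
  refine ⟨r / 3, by positivity, .single ?_⟩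
  have hx : closedBall (Φ x₀ u₀ c) δ ⊆ F := by
    simpa using hclear 0 ⟨le_rfl, hh.le⟩
  refine ⟨closedBall (Φ x₀ u₀ c) (min (r / 3) δ) ×ˢ
    (Set.Icc (h - η) h ×ˢ closedBall u₀ (min r ρ)), ?_, ?_, ?_⟩
  · exact measurableSet_closedBall.prod (measurableSet_Icc.prod measurableSet_closedBall)
  · rw [Measure.prod_prod, Measure.prod_prod]
    refine mul_ne_zero (unifMeasure_ne_zero hXfin ?_ ?_)
      (mul_ne_zero (unifMeasure_ne_zero ?_ ?_ ?_) (unifMeasure_ne_zero h𝕌fin ?_ ?_))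
    · exact (measure_closedBall_pos _ _ (by positivity)).ne'
    · exact (closedBall_subset_closedBall (min_le_right _ _)).trans (hx.trans hFX)
    · simp
    · simp [hη]
    · exact Set.Icc_subset_Icc (by linarith) hhT
    · exact (measure_closedBall_pos _ _ (by positivity)).ne'
    · exact (closedBall_subset_closedBall (min_le_right _ _)).trans hρU
  · rintro V v hv hvG ⟨q, t, u⟩ ⟨hq, ht, hu⟩
    simp only [mem_closedBall, mem_ball, dist_eq_norm] at hq hu hvG
    have hq' := hq.trans (min_le_left _ _)
    have ht0 : 0 ≤ t := by linarith [ht.1]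
    obtain ⟨-, hnear⟩ := hNN V ⟨v, hv⟩ q
    have hz : ‖NN V q - Φ x₀ u₀ c‖ ≤ r := by
      have h1 := hnear v hv
      have h2 := norm_sub_le_norm_sub_add_norm_sub v (Φ x₀ u₀ c) q
      have h3 := norm_sub_le_norm_sub_add_norm_sub (NN V q) q (Φ x₀ u₀ c)
      rw [norm_sub_rev (Φ x₀ u₀ c) q] at h2
      linarith
    have htraj := hclose (NN V q) u hz (hu.trans (min_le_left _ _))
    have hfree : ∀ s ∈ Set.Icc 0 t, Φ (NN V q) u s ∈ F := by
      intro s hs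
      have hs' : s ∈ Set.Icc 0 h := ⟨hs.1, hs.2.trans ht.2⟩
      apply hclear s hs'
      rw [mem_closedBall, dist_eq_norm]
      exact (htraj s hs').trans (min_le_right _ _)
    refine ⟨Φ (NN V q) u t, ?_, ?_⟩
    · rw [rrtStep, if_pos hfree]
      exact Finset.mem_insert_self _ _
    · rw [mem_ball, dist_eq_norm]
      have h1 := (htraj t ⟨ht0, ht.2⟩).trans (min_le_left _ _)
      have h2 := hcont t ht
      have h3 := norm_sub_le_norm_sub_add_norm_sub (Φ (NN V q) u t) (Φ x₀ u₀ (c + t))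
        (Φ x₀ u₀ (c + h))
      linarith

/-- An arc with constant control and arbitrary duration is split into equal arcs of duration at
most `Tprop`. -/
lemma steer_piece (hXfin : volume X < ⊤) (hFX : F ⊆ X) (h𝕌fin : volume 𝕌 < ⊤)
    (hKx : 0 < Kx) (hKu : 0 < Ku)
    (hfu : ∀ x u u', ‖f x u - f x u'‖ ≤ Ku * ‖u - u'‖)
    (hfx : ∀ x x' u, ‖f x u - f x' u‖ ≤ Kx * ‖x - x'‖)
    (hΦ0 : ∀ x u, Φ x u 0 = x)
    (hΦ' : ∀ x u, ∀ t ∈ Set.Ici (0 : ℝ),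
      HasDerivWithinAt (Φ x u) (f (Φ x u t) u) (Set.Ici 0) t)
    (hNN : ∀ (S : Finset (EuclideanSpace ℝ (Fin d))), S.Nonempty →
      ∀ q, NN S q ∈ S ∧ ∀ z ∈ S, ‖NN S q - q‖ ≤ ‖z - q‖)
    (hTprop : 0 < Tprop) {L : ℝ} (hL : 0 < L)
    {ρ δ : ℝ} (hρ : 0 < ρ) (hρU : closedBall u₀ ρ ⊆ 𝕌)
    (hδ : 0 < δ) (hclear : ∀ t ∈ Set.Icc 0 L, closedBall (Φ x₀ u₀ t) δ ⊆ F) :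
    Steer ((unifMeasure X).prod
      ((unifMeasure (Set.Icc (0 : ℝ) Tprop)).prod (unifMeasure 𝕌)))
      (rrtStep F NN Φ) x₀ (Φ x₀ u₀ L) := by
  obtain ⟨M, hM⟩ := exists_nat_gt (L / Tprop)
  have hM0 : (0 : ℝ) < M := lt_trans (by positivity) hM
  have hh : 0 < L / M := by positivity
  have hhT : L / M ≤ Tprop := by
    rw [div_lt_iff₀ hTprop] at hM
    rw [div_le_iff₀ hM0]
    linarith
  have main : ∀ n ≤ M, Steer ((unifMeasure X).prod
      ((unifMeasure (Set.Icc (0 : ℝ) Tprop)).prod (unifMeasure 𝕌)))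
      (rrtStep F NN Φ) x₀ (Φ x₀ u₀ (n * (L / M))) := by
    intro n
    induction n with
    | zero => intro _; simpa [hΦ0] using Steer.refl x₀
    | succ n ih =>
      intro hn
      refine (ih (by omega)).trans ?_
      have hn' : ((n : ℝ) + 1) * (L / M) ≤ L := by
        have : (n : ℝ) + 1 ≤ M := by exact_mod_cast hn
        calc ((n : ℝ) + 1) * (L / M) ≤ M * (L / M) := by gcongr
          _ = L := by field_simp
      have hc : 0 ≤ (n : ℝ) * (L / M) := by positivity
      have := steer_arc (x₀ := x₀) (u₀ := u₀) hXfin hFX h𝕌fin hKx hKu hfu hfx hΦ0 hΦ' hNN hc hh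
        hhT hρ hρU hδ (fun t ht => hclear _ ⟨by linarith [ht.1], by linarith [ht.2]⟩)
      rwa [show ((n + 1 : ℕ) : ℝ) * (L / M) = n * (L / M) + L / M by push_cast; ring]
  have := main M le_rfl
  rwa [show (M : ℝ) * (L / M) = L by field_simp] at this

end Arc

/-- probabilistic completeness of kinodynamic RRT with forward propagation of
random controls and durations.  If some trajectory generated by a piecewise constant control
function (with controls interior to 𝕌) connects `x_init` to the goal with positive clearance,
then the probability that the RRT tree has not reached the goal region after `k` iterations
decays exponentially in `k`. -/
theorem kinoRRT_probabilistically_complete (d D : ℕ)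
    (X : Set (EuclideanSpace ℝ (Fin d))) (hXmeas : MeasurableSet X)
    (hXpos : 0 < volume X) (hXfin : volume X < ⊤)
    (F : Set (EuclideanSpace ℝ (Fin d))) (hFX : F ⊆ X)
    (𝕌 : Set (EuclideanSpace ℝ (Fin D))) (h𝕌meas : MeasurableSet 𝕌)
    (h𝕌pos : 0 < volume 𝕌) (h𝕌fin : volume 𝕌 < ⊤)
    (f : EuclideanSpace ℝ (Fin d) → EuclideanSpace ℝ (Fin D) → EuclideanSpace ℝ (Fin d))
    (Kx Ku : ℝ) (hKx : 0 < Kx) (hKu : 0 < Ku)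
    (hfu : ∀ (x : EuclideanSpace ℝ (Fin d)) (u u' : EuclideanSpace ℝ (Fin D)),
      ‖f x u - f x u'‖ ≤ Ku * ‖u - u'‖)
    (hfx : ∀ (x x' : EuclideanSpace ℝ (Fin d)) (u : EuclideanSpace ℝ (Fin D)),
      ‖f x u - f x' u‖ ≤ Kx * ‖x - x'‖)
    (Φ : EuclideanSpace ℝ (Fin d) → EuclideanSpace ℝ (Fin D) → ℝ →
      EuclideanSpace ℝ (Fin d))
    (hΦ0 : ∀ x u, Φ x u 0 = x)
    (hΦ' : ∀ x u, ∀ t ∈ Set.Ici (0 : ℝ),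
      HasDerivWithinAt (Φ x u) (f (Φ x u t) u) (Set.Ici 0) t)
    (xinit : EuclideanSpace ℝ (Fin d)) (hinit : xinit ∈ F)
    (Tprop : ℝ) (hTprop : 0 < Tprop)
    (NN : Finset (EuclideanSpace ℝ (Fin d)) → EuclideanSpace ℝ (Fin d) →
      EuclideanSpace ℝ (Fin d))
    (hNN : ∀ (S : Finset (EuclideanSpace ℝ (Fin d))), S.Nonempty →
      ∀ q, NN S q ∈ S ∧ ∀ z ∈ S, ‖NN S q - q‖ ≤ ‖z - q‖)
    (xgoal : EuclideanSpace ℝ (Fin d)) (δgoal : ℝ) (hδgoal : 0 < δgoal)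
    (hgoal : closedBall xgoal δgoal ⊆ F)
    -- the reference trajectory, generated by a piecewise constant control function
    (π : ℝ → EuclideanSpace ℝ (Fin d)) (tπ : ℝ)
    (N : ℕ) (hN : 1 ≤ N) (s : ℕ → ℝ)
    (hs0 : s 0 = 0) (hsN : s N = tπ) (hsmono : ∀ j < N, s j < s (j + 1))
    (ubar : ℕ → EuclideanSpace ℝ (Fin D))
    (hubar : ∀ j < N, ∃ r : ℝ, 0 < r ∧ closedBall (ubar j) r ⊆ 𝕌)
    (hπpc : ∀ j < N, ∀ t ∈ Set.Icc (s j) (s (j + 1)),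
      π t = Φ (π (s j)) (ubar j) (t - s j))
    (hπ0 : π 0 = xinit) (hπT : π tπ = xgoal)
    (hπF : ∀ t ∈ Set.Icc 0 tπ, π t ∈ F)
    (δclear : ℝ) (hδclear : 0 < δclear)
    (hclear : ∀ t ∈ Set.Icc 0 tπ, closedBall (π t) δclear ⊆ F)
    -- the sampling distribution: infinite product of uniform measures on X × [0,Tprop] × 𝕌
    (μ : Measure (ℕ → EuclideanSpace ℝ (Fin d) × ℝ × EuclideanSpace ℝ (Fin D)))
    [IsProbabilityMeasure μ]
    (hμ : ∀ (I : Finset ℕ)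
      (B : ℕ → Set (EuclideanSpace ℝ (Fin d) × ℝ × EuclideanSpace ℝ (Fin D))),
      (∀ i ∈ I, MeasurableSet (B i)) →
      μ {ω | ∀ i ∈ I, ω i ∈ B i} =
        ∏ i ∈ I,
          ((unifMeasure X).prod
            ((unifMeasure (Set.Icc (0 : ℝ) Tprop)).prod (unifMeasure 𝕌))) (B i)) :
    ∃ a b : ℝ, 0 < a ∧ 0 < b ∧ ∀ k : ℕ,
      μ {ω | ∀ v ∈ kinoRRT d D F xinit NN Φ ω k, ¬ ‖v - xgoal‖ < δgoal} ≤
        ENNReal.ofReal (a * Real.exp (-b * k)) := by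
  set ν := (unifMeasure X).prod
    ((unifMeasure (Set.Icc (0 : ℝ) Tprop)).prod (unifMeasure 𝕌))
  have hs_le : ∀ i j, i ≤ j → j ≤ N → s i ≤ s j := by
    intro i j hij
    induction j, hij using Nat.le_induction with
    | base => intro _; exact le_rfl
    | succ j _ ih => intro hj; exact (ih (by omega)).trans (hsmono j (by omega)).le
  have hsteer : ∀ j ≤ N, Steer ν (rrtStep F NN Φ) xinit (π (s j)) := by
    intro j
    induction j with
    | zero => intro _; rw [hs0, hπ0]; exact Steer.refl _
    | succ j ih =>
      intro hj
      have hjN : j < N := hj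
      refine (ih hjN.le).trans ?_
      have hlt := hsmono j hjN
      obtain ⟨ρ, hρ, hρU⟩ := hubar j hjN
      rw [hπpc j hjN (s (j + 1)) ⟨hlt.le, le_rfl⟩]
      refine steer_piece hXfin hFX h𝕌fin hKx hKu hfu hfx hΦ0 hΦ' hNN hTprop (sub_pos.2 hlt) hρ hρU
        hδclear (fun t ht => ?_)
      have h0 := hs_le 0 j (Nat.zero_le _) hjN.le
      have h1 := hs_le (j + 1) N hj le_rfl
      have hpc := hπpc j hjN (s j + t) ⟨by linarith [ht.1], by linarith [ht.2]⟩
      rw [add_sub_cancel_left] at hpc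
      rw [← hpc]
      exact hclear _ ⟨by linarith [ht.1], by linarith [ht.2]⟩
  obtain ⟨r, hr, hchain⟩ := hsteer N le_rfl δgoal hδgoal
  rw [hsN, hπT] at hchain
  have hV : ∀ ω i, kinoRRT d D F xinit NN Φ ω (i + 1)
      = rrtStep F NN Φ (kinoRRT d D F xinit NN Φ ω i) (ω i) := fun _ _ => rfl
  have hmono : ∀ ω, Monotone (kinoRRT d D F xinit NN Φ ω) := by
    intro ω
    refine monotone_nat_of_le_succ fun i => ?_
    rw [hV, rrtStep]
    split_ifs
    · exact Finset.subset_insert _ _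
    · exact le_rfl
  have hdecay : ∀ G, Relation.ReflTransGen (Forces ν (rrtStep F NN Φ)) (ball xinit r) G →
      ∃ a b : ℝ, 0 < a ∧ 0 < b ∧ ∀ k : ℕ,
        μ {ω | ∀ v ∈ kinoRRT d D F xinit NN Φ ω k, v ∉ G} ≤
          ENNReal.ofReal (a * Real.exp (-b * k)) := by
    intro G hG
    induction hG with
    | refl =>
      refine ⟨1, 1, one_pos, one_pos, fun k => ?_⟩
      have hempty : {ω | ∀ v ∈ kinoRRT d D F xinit NN Φ ω k, v ∉ ball xinit r} = ∅ := by
        refine Set.eq_empty_of_forall_notMem fun ω hω => hω xinit ?_ (mem_ball_self hr)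
        exact hmono ω (Nat.zero_le k) (by simp [kinoRRT])
      rw [hempty, measure_empty]
      exact zero_le
    | tail _ hstep ih => exact exp_decay_of_forces μ hμ _ hV hmono hstep ih
  simpa only [mem_ball, dist_eq_norm] using hdecay _ hchain
end
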